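/- Let μ be a non-atomic Borel probability measure on the Cantor space Ω. Then there exists a Borel measurable function g : Ω → [0,∞) that is probability bounded with respect to μ, such that for every semimeasure bound a and every real c > 0 there exists ω ∈ Ω with g(ω) > 2 and sup { a(ω|n)/μ([ω|n]) : n ∈ ℕ, μ([ω|n]) > 0 } < c · g(ω)/log g(ω). -/

import Mathlib

open MeasureTheory Filter
open scoped ENNReal

/-- The cylinder `[x]` of a finite binary string `x` in the Cantor space `ℕ → Bool`:
the set of infinite sequences extending `x`. -/
def cyl (x : List Bool) : Set (ℕ → Bool) :=
  {ω | ∀ i : ℕ, (h : i < x.length) → ω i = x.get ⟨i, h⟩}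

/-- `seg ω n` is the string formed by the first `n` bits of `ω`. -/
def seg (ω : ℕ → Bool) (n : ℕ) : List Bool :=
  List.ofFn (fun i : Fin n => ω i)

/-- A set of strings is prefix-free if no element is a proper prefix of another. -/
def PrefixFree (S : Set (List Bool)) : Prop :=
  ∀ x ∈ S, ∀ y ∈ S, x <+: y → x = y

/-- A nonnegative function on strings is a semimeasure bound if its sum over
every prefix-free set of strings is at most `1`. -/
def IsSemimeasureBound (a : List Bool → ℝ) : Prop :=
  (∀ x, 0 ≤ a x) ∧
  ∀ S : Set (List Bool), PrefixFree S → ∑' x : S, ENNReal.ofReal (a x.1) ≤ 1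

/-- `tFun μ a ω = sup { a(ω|n) / μ([ω|n]) : n ∈ ℕ, μ([ω|n]) > 0 }`. -/
noncomputable def tFun (μ : Measure (ℕ → Bool)) (a : List Bool → ℝ)
    (ω : ℕ → Bool) : ℝ≥0∞ :=
  ⨆ (n : ℕ) (_ : 0 < μ (cyl (seg ω n))),
    ENNReal.ofReal (a (seg ω n)) / μ (cyl (seg ω n))


def PC (n : ℕ) (ω : ℕ → Bool) : Set (ℕ → Bool) := {ω' | ∀ i < n, ω' i = ω i}

def Det (n : ℕ) (D : Set (ℕ → Bool)) : Prop := ∀ ω ∈ D, PC n ω ⊆ D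

lemma cyl_seg (ω : ℕ → Bool) (n : ℕ) : cyl (seg ω n) = PC n ω := by
  ext ω'
  simp [cyl, seg, PC]

lemma mem_PC (n : ℕ) (ω : ℕ → Bool) : ω ∈ PC n ω := fun _ _ => rfl

lemma PC_anti {m n : ℕ} (h : m ≤ n) (ω : ℕ → Bool) : PC n ω ⊆ PC m ω :=
  fun _ hω i hi => hω i (lt_of_lt_of_le hi h)

lemma PC_eq {n : ℕ} {ω ω' : ℕ → Bool} (h : ω' ∈ PC n ω) : PC n ω' = PC n ω := by
  ext x
  constructor
  · intro hx i hi
    rw [hx i hi, h i hi]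
  · intro hx i hi
    rw [hx i hi, h i hi]

lemma Det_PC {m n : ℕ} (h : m ≤ n) (ω : ℕ → Bool) : Det n (PC m ω) := by
  intro x hx
  rw [← PC_eq hx]
  exact PC_anti h x

lemma Det.mono {m n : ℕ} (h : m ≤ n) {D : Set (ℕ → Bool)} (hD : Det m D) : Det n D :=
  fun ω hω => (PC_anti h ω).trans (hD ω hω)

lemma Det.compl {n : ℕ} {D : Set (ℕ → Bool)} (hD : Det n D) : Det n Dᶜ := by
  intro ω hω x hx hxD
  apply hω
  apply hD x hxD
  rw [PC_eq hx]
  exact mem_PC n ω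

lemma Det.inter {n : ℕ} {D E : Set (ℕ → Bool)} (hD : Det n D) (hE : Det n E) : Det n (D ∩ E) :=
  fun ω hω => Set.subset_inter (hD ω hω.1) (hE ω hω.2)

lemma Det.iUnion {n : ℕ} {ι : Sort*} {D : ι → Set (ℕ → Bool)} (hD : ∀ i, Det n (D i)) :
    Det n (⋃ i, D i) := by
  intro ω hω
  obtain ⟨i, hi⟩ := Set.mem_iUnion.1 hω
  exact (hD i ω hi).trans (Set.subset_iUnion D i)

def prj (n : ℕ) (ω : ℕ → Bool) : Fin n → Bool := fun i => ω i

lemma measurable_prj (n : ℕ) : Measurable (prj n) := by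
  unfold prj; fun_prop

lemma continuous_prj (n : ℕ) : Continuous (prj n) := by
  unfold prj; fun_prop

lemma PC_prj (n : ℕ) (ω : ℕ → Bool) : PC n ω = prj n ⁻¹' {prj n ω} := by
  ext x
  simp only [PC, prj, Set.mem_ofPred_eq, Set.mem_preimage, Set.mem_singleton_iff, funext_iff]
  exact ⟨fun h i => h i i.2, fun h i hi => h ⟨i, hi⟩⟩

lemma Det.eq_preimage {n : ℕ} {D : Set (ℕ → Bool)} (hD : Det n D) :
    D = prj n ⁻¹' (prj n '' D) := by
  apply Set.Subset.antisymm (Set.subset_preimage_image _ _)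
  rintro ω ⟨x, hx, hxω⟩
  apply hD x hx
  rw [PC_prj, hxω]; rfl

lemma Det.meas {n : ℕ} {D : Set (ℕ → Bool)} (hD : Det n D) : MeasurableSet D := by
  rw [hD.eq_preimage]
  exact measurable_prj n (Set.toFinite _).measurableSet

lemma isOpen_PC (n : ℕ) (ω : ℕ → Bool) : IsOpen (PC n ω) := by
  rw [PC_prj]
  exact (isOpen_discrete _).preimage (continuous_prj n)

lemma meas_PC (n : ℕ) (ω : ℕ → Bool) : MeasurableSet (PC n ω) := (isOpen_PC n ω).measurableSet

lemma small_cyl (μ : Measure (ℕ → Bool)) [IsProbabilityMeasure μ]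
    (hna : ∀ ω : ℕ → Bool, μ {ω} = 0) (ε : ℝ) (hε : 0 < ε) :
    ∃ m, ∀ m' ≥ m, ∀ ω, μ.real (PC m' ω) ≤ ε := by
  have h1 : ∀ ω, ∃ m, μ.real (PC m ω) ≤ ε := by
    intro ω
    have hI : ⋂ n, PC n ω = {ω} := by
      ext x
      simp only [Set.mem_iInter, Set.mem_singleton_iff]
      constructor
      · intro h; funext i; exact h (i+1) i (Nat.lt_succ_self i)
      · rintro rfl n; exact mem_PC n x
    have ht := MeasureTheory.tendsto_measure_iInter_atTop (μ := μ) (s := fun n => PC n ω)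
      (fun n => (meas_PC n ω).nullMeasurableSet) (fun m n h => PC_anti h ω) ⟨0, measure_ne_top _ _⟩
    rw [hI, hna] at ht
    have := (ht.eventually (gt_mem_nhds (ENNReal.ofReal_pos.2 hε))).exists
    obtain ⟨m, hm⟩ := this
    refine ⟨m, ?_⟩
    exact ENNReal.toReal_le_of_le_ofReal hε.le hm.le
  choose f hf using h1
  obtain ⟨t, -, ht⟩ := isCompact_univ.elim_nhds_subcover (fun ω => PC (f ω) ω)
    (fun x _ => (isOpen_PC _ _).mem_nhds (mem_PC _ x))
  refine ⟨t.sup f, fun m' hm' ω => ?_⟩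
  have := ht (Set.mem_univ ω)
  simp only [Set.mem_iUnion] at this
  obtain ⟨x, hx, hω⟩ := this
  refine le_trans (measureReal_mono ?_) (hf x)
  rw [← PC_eq hω]
  exact PC_anti ((Finset.le_sup hx).trans hm') ω

lemma sum_fiber (μ : Measure (ℕ → Bool)) [IsProbabilityMeasure μ] (n : ℕ) (E : Set (ℕ → Bool)) :
    μ.real E = ∑ y : Fin n → Bool, μ.real (E ∩ prj n ⁻¹' {y}) := by
  have h := sum_measureReal_preimage_singleton (μ := μ.restrict E) (f := prj n) Finset.univ
    (fun y _ => measurable_prj n (measurableSet_singleton y))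
  simp only [Finset.coe_univ, Set.preimage_univ, measureReal_restrict_apply MeasurableSet.univ,
    Set.univ_inter] at h
  rw [← h]
  refine Finset.sum_congr rfl fun y _ => ?_
  rw [measureReal_restrict_apply (measurable_prj n (measurableSet_singleton y)), Set.inter_comm]

lemma step (μ : Measure (ℕ → Bool)) [IsProbabilityMeasure μ]
    (hna : ∀ ω : ℕ → Bool, μ {ω} = 0) (n : ℕ) (δ : ℝ) (hδ : 0 < δ) (hδ1 : δ ≤ 1) :
    ∃ m A, n ≤ m ∧ Det m A ∧ ∀ D, Det n D →
      δ / 2 * μ.real D ≤ μ.real (A ∩ D) ∧ μ.real (A ∩ D) ≤ δ * μ.real D := by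
  have h1 : ∀ y : Fin n → Bool, ∃ m, 0 < μ.real (prj n ⁻¹' {y}) → ∀ m' ≥ m, ∀ ω,
      μ.real (PC m' ω) ≤ δ / 2 * μ.real (prj n ⁻¹' {y}) := by
    intro y
    by_cases hy : 0 < μ.real (prj n ⁻¹' {y})
    · obtain ⟨m, hm⟩ := small_cyl μ hna (δ / 2 * μ.real (prj n ⁻¹' {y})) (by positivity)
      exact ⟨m, fun _ => hm⟩
    · exact ⟨0, fun h => absurd h hy⟩
  choose f hf using h1
  set m := max n (Finset.univ.sup f) with hm
  have hnm : n ≤ m := le_max_left _ _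
  have hfm : ∀ y, f y ≤ m := fun y => (Finset.le_sup (Finset.mem_univ y)).trans (le_max_right _ _)
  let Q : Set (Set (Fin m → Bool)) :=
    {T | ∀ y : Fin n → Bool, μ.real (prj m ⁻¹' T ∩ prj n ⁻¹' {y}) ≤ δ * μ.real (prj n ⁻¹' {y})}
  have hQ0 : (∅ : Set (Fin m → Bool)) ∈ Q := by
    intro y
    simp only [Set.preimage_empty, Set.empty_inter, measureReal_empty]
    positivity
  obtain ⟨T, -, hT⟩ := (Set.toFinite Q).exists_le_maximal hQ0
  have hDetT : ∀ T : Set (Fin m → Bool), Det m (prj m ⁻¹' T) := by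
    intro T ω hω x hx
    rw [PC_prj] at hx
    have : prj m x = prj m ω := hx
    show prj m x ∈ T
    rw [this]; exact hω
  have low : ∀ y : Fin n → Bool,
      δ / 2 * μ.real (prj n ⁻¹' {y}) ≤ μ.real (prj m ⁻¹' T ∩ prj n ⁻¹' {y}) := by
    intro y
    by_contra! hlt
    have hpos : 0 < μ.real (prj n ⁻¹' {y}) := by
      by_contra! h0
      have h00 : μ.real (prj n ⁻¹' {y}) = 0 := le_antisymm h0 measureReal_nonneg
      rw [h00, mul_zero] at hlt
      exact absurd hlt (not_lt.2 measureReal_nonneg)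
    have hne : ¬ (prj n ⁻¹' {y} ⊆ prj m ⁻¹' T) := by
      intro hsub
      rw [Set.inter_eq_right.2 hsub] at hlt
      nlinarith
    obtain ⟨ω, hωy, hωT⟩ := Set.not_subset.1 hne
    have hPn : PC n ω = prj n ⁻¹' {y} := by
      rw [PC_prj, show prj n ω = y from hωy]
    have hins : insert (prj m ω) T ∈ Q := by
      intro y'
      have e : prj m ⁻¹' (insert (prj m ω) T) = PC m ω ∪ prj m ⁻¹' T := by
        rw [PC_prj, ← Set.preimage_union]; rfl
      rw [e, Set.union_inter_distrib_right]
      refine (measureReal_union_le _ _).trans ?_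
      by_cases hyy : y' = y
      · subst hyy
        have h2 := hf y' hpos m (hfm y') ω
        have h3 : μ.real (PC m ω ∩ prj n ⁻¹' {y'}) ≤ μ.real (PC m ω) :=
          measureReal_mono Set.inter_subset_left
        linarith
      · have : PC m ω ∩ prj n ⁻¹' {y'} = ∅ := by
          ext x
          simp only [Set.mem_inter_iff, Set.mem_empty_iff_false, iff_false, not_and]
          intro hx hx'
          have := PC_anti hnm ω hx
          rw [hPn] at this
          exact hyy (Eq.trans (Eq.symm hx') this)
        rw [this, measureReal_empty, zero_add]
        exact hT.prop y'
    exact hωT (hT.le_of_ge hins (Set.subset_insert _ _) (Set.mem_insert _ _))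
  refine ⟨m, prj m ⁻¹' T, hnm, hDetT T, fun D hD => ?_⟩
  have hDy : ∀ y : Fin n → Bool, D ∩ prj n ⁻¹' {y} = ∅ ∨ D ∩ prj n ⁻¹' {y} = prj n ⁻¹' {y} := by
    intro y
    by_cases h : (D ∩ prj n ⁻¹' {y}).Nonempty
    · right
      obtain ⟨ω, h1, h2⟩ := h
      apply Set.inter_eq_right.2
      have := hD ω h1
      rwa [PC_prj, show prj n ω = y from h2] at this
    · left; exact Set.not_nonempty_iff_eq_empty.1 h
  rw [sum_fiber μ n D, sum_fiber μ n (prj m ⁻¹' T ∩ D), Finset.mul_sum, Finset.mul_sum]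
  constructor
  · refine Finset.sum_le_sum fun y _ => ?_
    rw [Set.inter_assoc]
    rcases hDy y with h | h
    · rw [h]; simp
    · rw [h]; exact low y
  · refine Finset.sum_le_sum fun y _ => ?_
    rw [Set.inter_assoc]
    rcases hDy y with h | h
    · rw [h]; simp
    · rw [h]; exact hT.prop y

lemma exists_seq (μ : Measure (ℕ → Bool)) [IsProbabilityMeasure μ]
    (hna : ∀ ω : ℕ → Bool, μ {ω} = 0) :
    ∃ (n : ℕ → ℕ) (B : ℕ → Set (ℕ → Bool)), Monotone n ∧ (∀ j, Det (n (j+1)) (B j)) ∧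
      Pairwise (fun i j => Disjoint (B i) (B j)) ∧
      (∀ j D, Det (n j) D → μ.real (B j ∩ D) ≤ (1/2:ℝ)^(j+2) * μ.real D) ∧
      (∀ j, (1/2:ℝ)^(j+4) ≤ μ.real (B j)) := by
  choose f F hf1 hf2 hf3 using fun (n j : ℕ) => step μ hna n ((1/2:ℝ)^(j+2)) (by positivity)
    (pow_le_one₀ (by norm_num) (by norm_num))
  let n : ℕ → ℕ := fun j => Nat.rec 0 (fun j m => f m j) j
  have hn : ∀ j, n (j+1) = f (n j) j := fun j => rfl
  let A : ℕ → Set (ℕ → Bool) := fun j => F (n j) j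
  have hmono : Monotone n := monotone_nat_of_le_succ fun j => by rw [hn]; exact hf1 _ _
  have hA : ∀ j, Det (n (j+1)) (A j) := fun j => by rw [hn]; exact hf2 _ _
  let U : ℕ → Set (ℕ → Bool) := fun j => ⋃ i, ⋃ (_ : i < j), A i
  have hU : ∀ j, Det (n j) (U j) := fun j =>
    Det.iUnion fun i => Det.iUnion fun hi => (hA i).mono (hmono hi)
  have hAle : ∀ j, μ.real (A j) ≤ (1/2:ℝ)^(j+2) := by
    intro j
    have := (hf3 (n j) j Set.univ (fun _ _ => Set.subset_univ _)).2
    simpa [A] using this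
  have hUle : ∀ j, μ.real (U j) ≤ 1/2 - (1/2:ℝ)^(j+1) := by
    intro j
    induction j with
    | zero => simp [U]
    | succ j ih =>
      have : U (j+1) = U j ∪ A j := by
        ext x
        simp only [U, Set.mem_iUnion, Set.mem_union, Nat.lt_succ_iff_lt_or_eq]
        constructor
        · rintro ⟨i, hi | rfl, hx⟩
          · exact Or.inl ⟨i, hi, hx⟩
          · exact Or.inr hx
        · rintro (⟨i, hi, hx⟩ | hx)
          · exact ⟨i, Or.inl hi, hx⟩
          · exact ⟨j, Or.inr rfl, hx⟩
      rw [this]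
      refine (measureReal_union_le _ _).trans ?_
      have h2 := hAle j
      have e1 : (1/2:ℝ)^(j+1) = 2 * (1/2:ℝ)^(j+2) := by rw [pow_succ _ (j+1)]; ring
      have e2 : (1/2:ℝ)^(j+1+1) = (1/2:ℝ)^(j+2) := rfl
      linarith
  refine ⟨n, fun j => A j ∩ (U j)ᶜ, hmono, fun j => (hA j).inter ((hU j).compl.mono (hmono (Nat.le_succ j))),
    ?_, ?_, ?_⟩
  · have key : ∀ i j, i < j → Disjoint (A i ∩ (U i)ᶜ) (A j ∩ (U j)ᶜ) := by
      intro i j hij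
      rw [Set.disjoint_left]
      rintro x ⟨hx, -⟩ ⟨-, hx2⟩
      exact hx2 (Set.mem_iUnion₂.2 ⟨i, hij, hx⟩)
    intro i j hij
    rcases lt_or_gt_of_ne hij with h | h
    · exact key i j h
    · exact (key j i h).symm
  · intro j D hD
    refine le_trans (measureReal_mono ?_) (hf3 (n j) j D hD).2
    exact Set.inter_subset_inter_left _ Set.inter_subset_left
  · intro j
    have h1 := (hf3 (n j) j _ (hU j).compl).1
    have h2 : μ.real (U j)ᶜ = 1 - μ.real (U j) := probReal_compl_eq_one_sub (hU j).meas
    have h3 := hUle j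
    have h4 : (0:ℝ) < (1/2:ℝ)^(j+1) := by positivity
    have h5 : (1/2:ℝ)^(j+4) = (1/2:ℝ)^(j+2) / 2 * (1/2) := by ring
    rw [h5]
    refine le_trans ?_ h1
    gcongr
    linarith

lemma exists_window (c : ℝ) (hc : 0 < c) : ∃ i K : ℕ, 2 ≤ i ∧
    16 / c < ∑ j ∈ Finset.Ico i K, 1 / (4 * (j:ℝ)) ∧
    ∑ j ∈ Finset.Ico i K, 1 / (4 * (j:ℝ)) ≤ 2 ^ i / (i:ℝ) := by
  have h1 : Tendsto (fun n : ℕ => (2:ℝ)^n / n) atTop atTop := by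
    have h := tendsto_pow_const_div_const_pow_of_one_lt 1 (r := (2:ℝ)) (by norm_num)
    have h' : Tendsto (fun n : ℕ => (n:ℝ)^1 / 2^n) atTop (nhdsWithin 0 (Set.Ioi 0)) := by
      refine tendsto_nhdsWithin_iff.2 ⟨h, ?_⟩
      filter_upwards [eventually_gt_atTop 0] with n hn
      have : (0:ℝ) < n := by exact_mod_cast hn
      show (0:ℝ) < _
      positivity
    refine h'.inv_tendsto_nhdsGT_zero.congr fun n => ?_
    simp
  obtain ⟨i, hi2, hi⟩ := ((eventually_ge_atTop 2).and (h1.eventually_ge_atTop (16/c+1))).exists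
  have h2 : ∃ K, 16 / c < ∑ j ∈ Finset.Ico i K, 1 / (4 * (j:ℝ)) := by
    have h := Real.tendsto_sum_range_one_div_nat_succ_atTop
    obtain ⟨N, hN⟩ := (h.eventually_gt_atTop (4 * (16/c + ∑ j ∈ Finset.range i, 1 / (4 * (j:ℝ))))).exists
    refine ⟨max i (N+1), ?_⟩
    rw [Finset.sum_Ico_eq_sub _ (le_max_left _ _), lt_sub_iff_add_lt]
    have h3 : ∑ j ∈ Finset.range (N+1), 1 / (4 * (j:ℝ)) ≤ ∑ j ∈ Finset.range (max i (N+1)), 1 / (4 * (j:ℝ)) :=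
      Finset.sum_le_sum_of_subset_of_nonneg (Finset.range_mono (le_max_right _ _))
        (fun _ _ _ => by positivity)
    refine lt_of_lt_of_le ?_ h3
    rw [Finset.sum_range_succ']
    have h4 : ∑ j ∈ Finset.range N, 1 / (4 * ((j+1:ℕ):ℝ)) = (1/4) * ∑ j ∈ Finset.range N, 1 / ((j:ℝ)+1) := by
      rw [Finset.mul_sum]
      refine Finset.sum_congr rfl fun j _ => ?_
      push_cast
      field_simp
    rw [h4]
    simp only [Nat.cast_zero, mul_zero, div_zero, add_zero]
    linarith
  classical
  refine ⟨i, Nat.find h2, hi2, Nat.find_spec h2, ?_⟩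
  refine le_trans ?_ hi
  rcases Nat.eq_zero_or_pos (Nat.find h2) with h0 | h0
  · rw [h0]; simp; positivity
  · obtain ⟨k, hk⟩ := Nat.exists_eq_succ_of_ne_zero h0.ne'
    have hmin := Nat.find_min h2 (m := k) (by omega)
    rw [hk]
    by_cases hik : i ≤ k
    · rw [Nat.succ_eq_add_one, Finset.sum_Ico_succ_top hik]
      have : 1 / (4 * (k:ℝ)) ≤ 1 := by
        have : (2:ℝ) ≤ k := by exact_mod_cast hi2.trans hik
        rw [div_le_one (by positivity)]; linarith
      linarith
    · rw [Finset.Ico_eq_empty (by omega)]; simp; positivity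

lemma w_mono {i k : ℕ} (hi : 1 ≤ i) (h : i ≤ k) : (2:ℝ)^i / i ≤ 2^k / k := by
  induction k, h using Nat.le_induction with
  | base => exact le_rfl
  | succ k hk ih =>
    refine ih.trans ?_
    have : (1:ℝ) ≤ k := by exact_mod_cast hi.trans hk
    rw [div_le_div_iff₀ (by positivity) (by positivity)]
    push_cast
    have : (0:ℝ) < 2^k := by positivity
    rw [pow_succ]
    nlinarith

/-- The key local estimate. -/
lemma key_local (μ : Measure (ℕ → Bool)) [IsProbabilityMeasure μ]
    (n : ℕ → ℕ) (B : ℕ → Set (ℕ → Bool)) (hn : Monotone n) (hB : ∀ j, Det (n (j+1)) (B j))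
    (hd : Pairwise (fun i j => Disjoint (B i) (B j)))
    (hle : ∀ j D, Det (n j) D → μ.real (B j ∩ D) ≤ (1/2:ℝ)^(j+2) * μ.real D)
    (i0 K : ℕ) (hi0 : 2 ≤ i0)
    (hL : ∑ j ∈ Finset.Ico i0 K, 1 / (4 * (j:ℝ)) ≤ 2 ^ i0 / (i0:ℝ))
    (k : ℕ) (hk : k ∈ Finset.Ico i0 K) (ω : ℕ → Bool) (hω : ω ∈ B k) (l : ℕ) :
    ∑ j ∈ Finset.Ico i0 K, (2:ℝ)^j / j * μ.real (B j ∩ PC l ω) ≤ 2 * (2^k / k) * μ.real (PC l ω) := by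
  have hk' := Finset.mem_Ico.1 hk
  set p := μ.real (PC l ω) with hp
  have hp0 : 0 ≤ p := measureReal_nonneg
  have hdis : ∀ j, j ≠ k → n (j+1) ≤ l → B j ∩ PC l ω = ∅ := by
    intro j hj hjl
    ext x
    simp only [Set.mem_inter_iff, Set.mem_empty_iff_false, iff_false, not_and]
    intro hx hxl
    have h1 : ω ∈ B j := by
      apply (hB j).mono hjl x hx
      rw [PC_eq hxl]; exact mem_PC l ω
    exact Set.disjoint_left.1 (hd hj) h1 hω
  have hwk : (0:ℝ) ≤ 2^k / k := by positivity
  by_cases hc : n (k+1) ≤ l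
  · rw [Finset.sum_eq_single k]
    · have : μ.real (B k ∩ PC l ω) ≤ p := measureReal_mono Set.inter_subset_right
      have h3 : (2:ℝ)^k / k * μ.real (B k ∩ PC l ω) ≤ 2^k / k * p := by gcongr
      have : 0 ≤ (2:ℝ)^k / k * p := by positivity
      linarith
    · intro j _ hj
      have hs : PC l ω ⊆ B k := (hB k).mono hc ω hω
      have : B j ∩ PC l ω = ∅ :=
        ((hd hj).mono_right hs).inter_eq
      rw [this]; simp
    · intro h; exact absurd hk h
  · push Not at hc
    have hterm : ∀ j ∈ Finset.Ico i0 K, (2:ℝ)^j / j * μ.real (B j ∩ PC l ω) ≤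
        1 / (4 * (j:ℝ)) * p + (if n j < l ∧ l < n (j+1) then (2:ℝ)^k / k * p else 0) := by
      intro j hj
      have hj' := Finset.mem_Ico.1 hj
      have hj0 : (0:ℝ) < j := by exact_mod_cast (by omega : 0 < j)
      by_cases h1 : l ≤ n j
      · have h2 := hle j (PC l ω) (Det_PC h1 ω)
        have h3 : (2:ℝ)^j / j * μ.real (B j ∩ PC l ω) ≤ 2^j / j * ((1/2:ℝ)^(j+2) * p) := by gcongr
        have h4 : (2:ℝ)^j / j * ((1/2:ℝ)^(j+2) * p) = 1 / (4 * (j:ℝ)) * p := by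
          rw [pow_add, one_div_pow]; field_simp; norm_num; ring
        rw [if_neg (by omega)]
        linarith
      · by_cases h2 : l < n (j+1)
        · rw [if_pos ⟨by omega, h2⟩]
          have hjk : j ≤ k := by
            by_contra! hkj
            have : n (k+1) ≤ n j := hn hkj
            omega
          have h3 : μ.real (B j ∩ PC l ω) ≤ p := measureReal_mono Set.inter_subset_right
          have h4 := w_mono (by omega) hjk
          have h5 : (2:ℝ)^j / j * μ.real (B j ∩ PC l ω) ≤ 2^k / k * p := by gcongr
          have : 0 ≤ 1 / (4 * (j:ℝ)) * p := by positivity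
          linarith
        · have hjk : j ≠ k := by rintro rfl; omega
          rw [hdis j hjk (by omega), if_neg (by omega)]
          simp only [measureReal_empty, mul_zero, add_zero]
          positivity
    refine (Finset.sum_le_sum hterm).trans ?_
    rw [Finset.sum_add_distrib, ← Finset.sum_mul]
    have h1 : (∑ j ∈ Finset.Ico i0 K, 1 / (4 * (j:ℝ))) * p ≤ 2^k / k * p := by
      gcongr
      exact hL.trans (w_mono (by omega) hk'.1)
    have h2 : ∑ j ∈ Finset.Ico i0 K, (if n j < l ∧ l < n (j+1) then (2:ℝ)^k / k * p else 0) ≤ 2^k / k * p := by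
      rw [← Finset.sum_filter, Finset.sum_const, nsmul_eq_mul]
      have hcard : ((Finset.Ico i0 K).filter (fun j => n j < l ∧ l < n (j+1))).card ≤ 1 := by
        rw [Finset.card_le_one]
        have : ∀ a b, a < b → n a < l → l < n (a+1) → n b < l → False := by
          intro a b hab _ h2 h3
          have : n (a+1) ≤ n b := hn hab
          omega
        intro a ha b hb
        have ha := (Finset.mem_filter.1 ha).2
        have hb := (Finset.mem_filter.1 hb).2
        rcases lt_trichotomy a b with h | h | h
        · exact (this a b h ha.1 ha.2 hb.1).elim
        · exact h
        · exact (this b a h hb.1 hb.2 ha.1).elim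
      have hcard' : (((Finset.Ico i0 K).filter (fun j => n j < l ∧ l < n (j+1))).card : ℝ) ≤ 1 := by
        exact_mod_cast hcard
      have : 0 ≤ (2:ℝ)^k / k * p := by positivity
      nlinarith
    linarith

lemma covering (μ : Measure (ℕ → Bool)) [IsProbabilityMeasure μ]
    (B : ℕ → Set (ℕ → Bool)) (hBm : ∀ j, MeasurableSet (B j))
    (hd : Pairwise (fun i j => Disjoint (B i) (B j)))
    (hlow : ∀ j, (1/2:ℝ)^(j+4) ≤ μ.real (B j))
    (i0 K : ℕ) (hi0 : 2 ≤ i0)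
    (hkey : ∀ k ∈ Finset.Ico i0 K, ∀ ω ∈ B k, ∀ l,
      ∑ j ∈ Finset.Ico i0 K, (2:ℝ)^j / j * μ.real (B j ∩ PC l ω) ≤ 2 * (2^k / k) * μ.real (PC l ω))
    (c : ℝ) (hc : 0 < c)
    (hL : 16 / c < ∑ j ∈ Finset.Ico i0 K, 1 / (4 * (j:ℝ)))
    (a : List Bool → ℝ) (ha : IsSemimeasureBound a)
    (hcov : ∀ k ∈ Finset.Ico i0 K, ∀ ω ∈ B k, ∃ l,
      c / 2 * (2^k / k) * μ.real (PC l ω) ≤ a (seg ω l)) : False := by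
  let S0 : Set (List Bool) := {x | ∃ k ∈ Finset.Ico i0 K, ∃ ω ∈ B k, ∃ l, x = seg ω l ∧
      c / 2 * (2^k / k) * μ.real (PC l ω) ≤ a (seg ω l)}
  let S : Set (List Bool) := {x | x ∈ S0 ∧ ∀ y ∈ S0, y <+: x → y = x}
  have hSpf : PrefixFree S := fun x hx y hy hxy => hy.2 x hx.1 hxy
  have hS0S : ∀ N, ∀ x ∈ S0, x.length ≤ N → ∃ y ∈ S, y <+: x := by
    intro N
    induction N with
    | zero =>
      intro x hx hN
      refine ⟨x, ⟨hx, fun y _ hyx => hyx.eq_of_length_le (by omega)⟩, List.prefix_rfl⟩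
    | succ N ih =>
      intro x hx hN
      by_cases h : ∀ y ∈ S0, y <+: x → y = x
      · exact ⟨x, ⟨hx, h⟩, List.prefix_rfl⟩
      · push Not at h
        obtain ⟨y, hy, hyx, hne⟩ := h
        have : y.length < x.length := by
          by_contra! hle
          exact hne (hyx.eq_of_length_le hle)
        obtain ⟨z, hz, hzy⟩ := ih y hy (by omega)
        exact ⟨z, hz, hzy.trans hyx⟩
  have hcyl : ∀ x y : List Bool, y <+: x → cyl x ⊆ cyl y := by
    intro x y hyx ω hω i hi
    have h1 := hω i (lt_of_lt_of_le hi hyx.length_le)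
    rw [h1]
    simp only [List.get_eq_getElem]
    exact (hyx.getElem hi).symm
  let ν : Measure (ℕ → Bool) := ∑ j ∈ Finset.Ico i0 K, ENNReal.ofReal ((2:ℝ)^j / j) • μ.restrict (B j)
  have hν : ∀ E, MeasurableSet E → ν E = ENNReal.ofReal
      (∑ j ∈ Finset.Ico i0 K, (2:ℝ)^j / j * μ.real (B j ∩ E)) := by
    intro E hE
    rw [ENNReal.ofReal_sum_of_nonneg (fun j _ => by positivity)]
    simp only [ν, Measure.coe_finsetSum, Finset.sum_apply, Measure.smul_apply, smul_eq_mul]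
    refine Finset.sum_congr rfl fun j _ => ?_
    rw [Measure.restrict_apply hE, ENNReal.ofReal_mul (by positivity), Set.inter_comm,
      ofReal_measureReal]
  have hSsum := ha.2 S hSpf
  have hterm : ∀ x : S, ENNReal.ofReal (c/4) * ν (cyl x.1) ≤ ENNReal.ofReal (a x.1) := by
    rintro ⟨x, ⟨k, hk, ω, hω, l, rfl, hle⟩, -⟩
    simp only [cyl_seg]
    rw [hν _ (meas_PC l ω), ← ENNReal.ofReal_mul (by positivity)]
    apply ENNReal.ofReal_le_ofReal
    have := mul_le_mul_of_nonneg_left (hkey k hk ω hω l) (by positivity : 0 ≤ c/4)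
    refine this.trans (le_trans (le_of_eq ?_) hle)
    ring
  let V := ⋃ x ∈ S, cyl x
  have hV : ∀ k ∈ Finset.Ico i0 K, B k ⊆ V := by
    intro k hk ω hω
    obtain ⟨l, hl⟩ := hcov k hk ω hω
    obtain ⟨y, hy, hyx⟩ := hS0S _ (seg ω l) ⟨k, hk, ω, hω, l, rfl, hl⟩ le_rfl
    refine Set.mem_iUnion₂.2 ⟨y, hy, hcyl _ _ hyx ?_⟩
    rw [cyl_seg]; exact mem_PC l ω
  have hVm : MeasurableSet V := by
    refine MeasurableSet.biUnion (Set.to_countable S) ?_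
    rintro x ⟨⟨k, hk, ω, hω, l, rfl, hle⟩, -⟩
    rw [cyl_seg]; exact meas_PC l ω
  have h1 : ENNReal.ofReal (c/4) * ν V ≤ 1 := by
    calc ENNReal.ofReal (c/4) * ν V ≤ ENNReal.ofReal (c/4) * ∑' x : S, ν (cyl x.1) := by
          gcongr
          exact measure_biUnion_le ν (Set.to_countable S) _
      _ = ∑' x : S, ENNReal.ofReal (c/4) * ν (cyl x.1) := ENNReal.tsum_mul_left.symm
      _ ≤ _ := (ENNReal.tsum_le_tsum hterm).trans hSsum
  rw [hν V hVm, ← ENNReal.ofReal_mul (by positivity), ENNReal.ofReal_le_one] at h1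
  have h2 : (1/4) * ∑ j ∈ Finset.Ico i0 K, 1 / (4 * (j:ℝ)) ≤
      ∑ j ∈ Finset.Ico i0 K, (2:ℝ)^j / j * μ.real (B j ∩ V) := by
    rw [Finset.mul_sum]
    refine Finset.sum_le_sum fun j hj => ?_
    rw [Set.inter_eq_left.2 (hV j hj)]
    have hj' := Finset.mem_Ico.1 hj
    have hj0 : (0:ℝ) < j := by exact_mod_cast (by omega : 0 < j)
    have h3 : (2:ℝ)^j / j * (1/2:ℝ)^(j+4) ≤ 2^j / j * μ.real (B j) := by
      have := hlow j
      gcongr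
    refine le_trans (le_of_eq ?_) h3
    rw [pow_add, one_div_pow]; field_simp; norm_num
  have h3 : c/4 * ((1/4) * (16/c)) < c/4 * ((1/4) * ∑ j ∈ Finset.Ico i0 K, 1 / (4 * (j:ℝ))) := by
    gcongr
  have h4 := mul_le_mul_of_nonneg_left h2 (by positivity : 0 ≤ c/4)
  have h5 : c/4 * ((1/4) * (16/c)) = 1 := by field_simp; norm_num
  linarith

/-- measure-theoretic core of Theorem 2. For a non-atomic Borel
probability measure `μ` on the Cantor space there is a measurable nonnegative
probability bounded function `g` such that for every semimeasure bound `a` and every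
`c > 0` there is an `ω` with `g(ω) > 2` and
`sup_n a(ω|n)/μ([ω|n]) < c · g(ω) / log₂ g(ω)`. -/
theorem stmt14 (μ : Measure (ℕ → Bool)) [IsProbabilityMeasure μ]
    (hna : ∀ ω : ℕ → Bool, μ {ω} = 0) :
    ∃ g : (ℕ → Bool) → ℝ, Measurable g ∧ (∀ ω, 0 ≤ g ω) ∧
      (∀ C : ℝ, 0 < C → μ {ω | C < g ω} ≤ ENNReal.ofReal (1 / C)) ∧
      ∀ a : List Bool → ℝ, IsSemimeasureBound a → ∀ c : ℝ, 0 < c →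
        ∃ ω : ℕ → Bool, 2 < g ω ∧
          tFun μ a ω < ENNReal.ofReal (c * g ω / Real.logb 2 (g ω)) := by
  obtain ⟨n, B, hn, hB, hd, hle, hlow⟩ := exists_seq μ hna
  let G : (ℕ → Bool) → ℝ≥0∞ := fun ω => ∑' j, (B j).indicator (fun _ => (2:ℝ≥0∞)^j) ω
  have hG : ∀ k, ∀ ω ∈ B k, G ω = 2^k := by
    intro k ω hω
    show ∑' j, (B j).indicator (fun _ => (2:ℝ≥0∞)^j) ω = 2^k
    rw [tsum_eq_single k]
    · exact Set.indicator_of_mem hω _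
    · intro j hj
      exact Set.indicator_of_notMem (fun h => Set.disjoint_left.1 (hd hj) h hω) _
  have hg : ∀ k, ∀ ω ∈ B k, (G ω).toReal = 2^k := by
    intro k ω hω
    rw [hG k ω hω]; simp
  have hBle : ∀ j, μ.real (B j) ≤ (1/2:ℝ)^(j+2) := by
    intro j
    have := hle j Set.univ (fun _ _ => Set.subset_univ _)
    simpa using this
  refine ⟨fun ω => (G ω).toReal, ?_, fun ω => ENNReal.toReal_nonneg, ?_, ?_⟩
  · refine Measurable.ennreal_toReal ?_
    exact Measurable.tsum fun j => measurable_const.indicator (hB j).meas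
  · intro C hC
    by_cases hC1 : C < 1
    · refine prob_le_one.trans ?_
      rw [ENNReal.one_le_ofReal, le_div_iff₀ hC]; linarith
    · push Not at hC1
      obtain ⟨k, hk1, hk2⟩ := exists_nat_pow_near hC1 (by norm_num : (1:ℝ) < 2)
      have hsub : {ω | C < (G ω).toReal} ⊆ ⋃ i, B (k + i) := by
        intro ω hω
        have hω : C < (G ω).toReal := hω
        by_cases h : ∃ j, ω ∈ B j
        · obtain ⟨j, hj⟩ := h
          rw [hg j ω hj] at hω
          have : k < j := (pow_lt_pow_iff_right₀ (by norm_num : (1:ℝ) < 2)).1 (hk1.trans_lt hω)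
          refine Set.mem_iUnion.2 ⟨j - k, ?_⟩
          rwa [Nat.add_sub_cancel' this.le]
        · push Not at h
          have : G ω = 0 := by
            show ∑' j, (B j).indicator (fun _ => (2:ℝ≥0∞)^j) ω = 0
            simp [h]
          rw [this] at hω
          simp at hω; linarith
      refine (measure_mono hsub).trans ((measure_iUnion_le _).trans ?_)
      have hs : HasSum (fun i : ℕ => (1/2:ℝ)^(k+i+2)) ((1/2:ℝ)^(k+1)) := by
        have := hasSum_geometric_two.mul_left ((1/2:ℝ)^(k+2))
        have e1 : (fun i : ℕ => (1/2:ℝ)^(k+i+2)) = fun i => (1/2:ℝ)^(k+2) * (1/2:ℝ)^i := by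
          funext i; ring
        have e2 : (1/2:ℝ)^(k+1) = (1/2:ℝ)^(k+2) * 2 := by ring
        rw [e1, e2]
        exact this
      calc ∑' i, μ (B (k+i)) ≤ ∑' i, ENNReal.ofReal ((1/2:ℝ)^(k+i+2)) := by
            refine ENNReal.tsum_le_tsum fun i => ?_
            rw [← ofReal_measureReal]
            exact ENNReal.ofReal_le_ofReal (hBle _)
        _ = ENNReal.ofReal ((1/2:ℝ)^(k+1)) := by
            rw [← ENNReal.ofReal_tsum_of_nonneg (fun _ => by positivity) hs.summable, hs.tsum_eq]
        _ ≤ _ := by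
            apply ENNReal.ofReal_le_ofReal
            rw [one_div_pow]
            exact one_div_le_one_div_of_le hC hk2.le
  · intro a ha c hc
    by_contra! hcon
    obtain ⟨i0, K, hi0, hL1, hL2⟩ := exists_window c hc
    refine covering μ B (fun j => (hB j).meas) hd hlow i0 K hi0
      (fun k hk ω hω l => key_local μ n B hn hB hd hle i0 K hi0 hL2 k hk ω hω l) c hc hL1 a ha ?_
    intro k hk ω hω
    have hk2 : 2 ≤ k := hi0.trans (Finset.mem_Ico.1 hk).1
    have hk0 : (0:ℝ) < k := by exact_mod_cast (by omega : 0 < k)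
    have h2 : (2:ℝ) < (G ω).toReal := by
      rw [hg k ω hω]
      calc (2:ℝ) < 2^2 := by norm_num
        _ ≤ 2^k := pow_le_pow_right₀ (by norm_num) hk2
    have h3 := hcon ω h2
    rw [hg k ω hω, Real.logb_pow, Real.logb_self_eq_one (by norm_num), mul_one] at h3
    have h4 : ENNReal.ofReal (c / 2 * (2^k / k)) < tFun μ a ω := by
      refine lt_of_lt_of_le ?_ h3
      rw [ENNReal.ofReal_lt_ofReal_iff (by positivity)]
      have : 0 < c * 2^k / k := by positivity
      have e : c / 2 * (2^k / k) = c * 2^k / k / 2 := by ring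
      rw [e]; linarith
    unfold tFun at h4
    simp only [lt_iSup_iff, cyl_seg] at h4
    obtain ⟨l, hpos, hl⟩ := h4
    refine ⟨l, ?_⟩
    have h5 := (ENNReal.le_div_iff_mul_le (Or.inl hpos.ne') (Or.inl (measure_ne_top _ _))).1 hl.le
    rw [← ofReal_measureReal, ← ENNReal.ofReal_mul (by positivity)] at h5
    exact (ENNReal.ofReal_le_ofReal_iff (ha.1 _)).1 h5
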